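/- Wiener's Lemma for holomorphic functional calculus (circle-contour version): let 𝒜 be a unital complex Banach algebra, f ∈ A(𝒜), c₀ ∈ ℂ and ρ > 0 such that for every z ∈ S¹ and every u ∈ ℂ with |u − c₀| = ρ, the element u·1 − f(z) is invertible in 𝒜. Let h : ℂ → ℂ be continuous on the circle {u : |u − c₀| = ρ}. Then the function g : S¹ → 𝒜 defined by the contour integral g(z) = (1/(2πi)) ∮_{|u−c₀|=ρ} h(u)·(u·1 − f(z))⁻¹ du belongs to A(𝒜). In particular (taking h ≡ 1) the spectral projection z ↦ (1/(2πi)) ∮_{|u−c₀|=ρ} (u·1 − f(z))⁻¹ du belongs to A(𝒜). -/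

import Mathlib

/-!
The proof lifts the problem to a Banach algebra. Operators on `ℓ¹(ℤ, 𝒜)` commuting with the shift
`S` form a complex Banach algebra `B` with `S` central, and the Fourier series of `f` gives the
element `F = ∑ cₙ Sⁿ` of `B`, where `cₙ` acts by left multiplication (`EllOne.convOp`).

The heart is that `u - F` is invertible in `B` for `u` on the contour (`EllOne.isUnit_sub_convOp`).
Since `𝒜` need not be commutative, characters are replaced by maximal left ideals `L` of `B`: by
Schur's lemma and non-emptiness of the spectrum, the central unit `S` is a scalar `z` modulo `L`
(`exists_sub_algebraMap_mem_of_isMaximal`), and `|z| = 1` because `S` and `S⁻¹` are contractions.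
Hence `u - F` is congruent to `u - f z` modulo the closed ideal `L`, so it cannot lie in `L`. This
gives a left inverse (`exists_left_inverse`), and the opposite algebra gives a right inverse.

The resolvent `u ↦ (u - F)⁻¹` is then continuous on the contour with values in `B`, and
`Γ = (2πi)⁻¹ ∮ h(u) (u - F)⁻¹ du` exists in `B`. Applying `Γ` to the unit sequence yields an element
of `ℓ¹(ℤ, 𝒜)`. Its series has sum `g`, because the symbol of `(u - F)⁻¹` at `z` is
`(u - f z)⁻¹`; thus it is the sequence of Fourier coefficients of `g`
(`fourierCoeffA_of_hasSum`).
-/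

open MeasureTheory Filter Topology

/-- The `n`-th Fourier coefficient of a function `f : S¹ → 𝒜`,
`c_n(f) = (1/2π) ∫₀^{2π} e^{-inθ} f(e^{iθ}) dθ`. -/
noncomputable def fourierCoeffA {𝒜 : Type*} [NormedRing 𝒜] [NormedSpace ℂ 𝒜]
    (f : ℂ → 𝒜) (n : ℤ) : 𝒜 :=
  ((2 * (Real.pi : ℂ)))⁻¹ • ∫ θ in (0:ℝ)..(2 * Real.pi),
    Complex.exp (-(n : ℂ) * Complex.I * (θ : ℂ)) • f (Complex.exp (Complex.I * (θ : ℂ)))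

/-! ### Vector-valued Fourier series -/

/-- A continuous function with absolutely summable Fourier coefficients is the sum of its Fourier
series. Testing against continuous functionals reduces this to the scalar case. -/
theorem hasSum_fourierCoeffA {𝒜 : Type*} [NormedRing 𝒜] [NormedAlgebra ℂ 𝒜]
    [CompleteSpace 𝒜] (f : ℂ → 𝒜)
    (hf_cont : ContinuousOn f (Metric.sphere (0:ℂ) 1))
    (hf_sum : Summable fun n : ℤ => ‖fourierCoeffA f n‖) (z : ℂ) (hz : ‖z‖ = 1) :
    HasSum (fun n : ℤ => z ^ n • fourierCoeffA f n) (f z) := by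
  have hsum : Summable (fun n : ℤ => z ^ n • fourierCoeffA f n) := by
    refine Summable.of_norm ?_
    simpa [norm_smul, norm_zpow, hz] using hf_sum
  suffices H : ∑' n : ℤ, z ^ n • fourierCoeffA f n = f z from H ▸ hsum.hasSum
  refine (SeparatingDual.eq_iff_forall_dual_eq (R := ℂ)).2 fun φ => ?_
  have : Fact (0 < 2 * Real.pi) := ⟨Real.two_pi_pos⟩
  let k : C(AddCircle (2 * Real.pi), ℂ) :=
    ⟨fun x => φ (f (AddCircle.toCircle x)), φ.continuous.comp <|
      hf_cont.comp_continuous (continuous_subtype_val.comp AddCircle.continuous_toCircle)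
        fun x => (AddCircle.toCircle x).2⟩
  have hexp : Continuous fun θ : ℝ => f (Complex.exp (Complex.I * θ)) :=
    hf_cont.comp_continuous (by fun_prop) fun θ => by
      simp [mul_comm Complex.I, Complex.norm_exp_ofReal_mul_I]
  have hint : ∀ n : ℤ, IntervalIntegrable (fun θ : ℝ => Complex.exp (-(n : ℂ) * Complex.I * θ) •
      f (Complex.exp (Complex.I * θ))) volume 0 (2 * Real.pi) := fun n =>
    (Continuous.smul (by fun_prop) hexp).intervalIntegrable _ _
  have hk : ∀ n : ℤ, fourierCoeff k n = φ (fourierCoeffA f n) := fun n => by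
    rw [fourierCoeff_eq_intervalIntegral _ n 0, fourierCoeffA, map_smul,
      ← ContinuousLinearMap.intervalIntegral_comp_comm φ
        (hint n), zero_add, one_div,
        ← Complex.coe_smul]
    push_cast
    congr 1
    refine intervalIntegral.integral_congr fun θ _ => ?_
    simp only [fourier_coe_apply, map_smul, k, ContinuousMap.coe_mk, AddCircle.toCircle_apply_mk,
      Circle.coe_exp]
    have hpi : (Real.pi : ℂ) ≠ 0 := by exact_mod_cast Real.pi_ne_zero
    have hpi' : Real.pi ≠ 0 := Real.pi_ne_zero
    congr 2
    · push_cast; field_simp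
    · rw [div_self (by positivity), one_mul, mul_comm]
  have hks : Summable (fourierCoeff k) := by
    rw [show fourierCoeff k = fun n => φ (fourierCoeffA f n) from funext hk]
    exact (Summable.of_norm hf_sum).mapL φ
  obtain ⟨θ, hθ⟩ : ∃ x : AddCircle (2 * Real.pi), (AddCircle.toCircle x : ℂ) = z := by
    refine ⟨(Complex.arg z : ℝ), ?_⟩
    rw [AddCircle.toCircle_apply_mk, Circle.coe_exp, div_self (by positivity), one_mul]
    simpa [hz] using Complex.norm_mul_exp_arg_mul_I z
  have h1 := has_pointwise_sum_fourier_series_of_summable hks θ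
  have h2 := (hsum.hasSum.mapL φ)
  have e : (fun n => fourierCoeff k n • fourier n θ) =
      fun n : ℤ => φ (z ^ n • fourierCoeffA f n) := by
    ext n
    rw [hk, fourier_apply, AddCircle.toCircle_zsmul, Circle.coe_zpow, hθ, map_smul, smul_eq_mul,
      smul_eq_mul, mul_comm]
  rw [e] at h1
  rw [h2.unique h1, ← hθ]
  rfl

/-- The coefficients of an absolutely convergent trigonometric series are the Fourier coefficients
of its sum. -/
theorem fourierCoeffA_of_hasSum {𝒜 : Type*} [NormedRing 𝒜] [NormedAlgebra ℂ 𝒜]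
    [CompleteSpace 𝒜] (g : ℂ → 𝒜) (γ : ℤ → 𝒜) (hγ : Summable fun n => ‖γ n‖)
    (hg : ∀ z : ℂ, ‖z‖ = 1 → HasSum (fun n : ℤ => z ^ n • γ n) (g z)) (n : ℤ) :
    fourierCoeffA g n = γ n := by
  have hnorm : ∀ θ : ℝ, ‖Complex.exp (Complex.I * θ)‖ = 1 := fun θ => by
    rw [mul_comm, Complex.norm_exp_ofReal_mul_I]
  have hterm : ∀ (m : ℤ) (θ : ℝ), Complex.exp (-(n : ℂ) * Complex.I * (θ : ℂ)) •
      (Complex.exp (Complex.I * θ) ^ m • γ m) =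
      Complex.exp (((m - n : ℤ) : ℂ) * Complex.I * θ) • γ m := fun m θ => by
    rw [smul_smul, ← Complex.exp_int_mul, ← Complex.exp_add]
    congr 2; push_cast; ring
  have hsum := intervalIntegral.hasSum_integral_of_dominated_convergence
    (a := 0) (b := 2 * Real.pi) (μ := volume)
    (F := fun (m : ℤ) (θ : ℝ) => Complex.exp (((m - n : ℤ) : ℂ) * Complex.I * θ) • γ m)
    (f := fun θ => Complex.exp (-(n : ℂ) * Complex.I * (θ : ℂ)) •
      g (Complex.exp (Complex.I * (θ : ℂ))))
    (fun m _ => ‖γ m‖)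
    (fun m => Continuous.aestronglyMeasurable (by fun_prop))
    (fun m => Eventually.of_forall fun θ _ => by
      have : ((m - n : ℤ) : ℂ) * Complex.I * θ = ((((m - n : ℤ) : ℝ) * θ : ℝ) : ℂ) * Complex.I := by
        push_cast; ring
      rw [norm_smul, this, Complex.norm_exp_ofReal_mul_I, one_mul])
    (Eventually.of_forall fun θ _ => hγ) (by simp)
    (Eventually.of_forall fun θ _ => by
      simp_rw [← hterm]
      exact (hg _ (hnorm θ)).const_smul _)
  have hint : ∀ m : ℤ, ∫ θ in (0:ℝ)..(2 * Real.pi),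
      Complex.exp (((m - n : ℤ) : ℂ) * Complex.I * θ) • γ m =
      if m = n then (2 * (Real.pi : ℂ)) • γ n else 0 := fun m => by
    rw [intervalIntegral.integral_smul_const]
    split_ifs with hmn
    · subst hmn; simp
    · have h0 : ((m - n : ℤ) : ℂ) * Complex.I ≠ 0 :=
        mul_ne_zero (by exact_mod_cast sub_ne_zero.2 hmn) Complex.I_ne_zero
      rw [integral_exp_mul_complex h0]
      have : ((m - n : ℤ) : ℂ) * Complex.I * ((2 * Real.pi : ℝ) : ℂ) =
          ((m - n : ℤ) : ℂ) * (2 * Real.pi * Complex.I) := by push_cast; ring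
      rw [this, Complex.exp_int_mul_two_pi_mul_I]
      simp
  simp_rw [hint] at hsum
  rw [fourierCoeffA, hsum.unique (hasSum_ite_eq n _), smul_smul, inv_mul_cancel₀, one_smul]
  exact_mod_cast Real.two_pi_pos.ne'

/-! ### Inversion of Laurent series in a central unit -/

/-- A central element of a complex Banach algebra is congruent to a scalar modulo every maximal left
ideal `L`. It acts on the simple Banach module `B ⧸ L` by a bounded operator `T`; for `z` in the
spectrum of `T` the module endomorphism `z - T` is not invertible, hence zero by Schur's lemma. -/
theorem exists_sub_algebraMap_mem_of_isMaximal {B : Type*} [NormedRing B] [NormedAlgebra ℂ B]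
    [CompleteSpace B] (U : B) (hU : ∀ x, U * x = x * U) (L : Ideal B) [hL : L.IsMaximal] :
    ∃ z : ℂ, U - algebraMap ℂ B z ∈ L := by
  by_contra! hcon
  set M : Submodule ℂ B := L.restrictScalars ℂ with hM
  have hMmem : ∀ x, x ∈ M ↔ x ∈ L := fun x => Iff.rfl
  have hMc : IsClosed (M : Set B) := Ideal.IsMaximal.isClosed (I := L)
  have : IsClosed (M : Set B) := hMc
  have h1L : (1 : B) ∉ L := fun h => hL.ne_top ((Ideal.eq_top_iff_one L).2 h)
  have : Nontrivial (B ⧸ M) := by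
    refine Submodule.Quotient.nontrivial_iff.2 fun h => h1L ?_
    rw [← hMmem, h]; trivial
  have hmap : M ≤ M.comap (LinearMap.mulLeft ℂ U) := fun x hx => by
    exact L.mul_mem_left U hx
  -- `T` is multiplication by `U` on the quotient
  let T : (B ⧸ M) →L[ℂ] (B ⧸ M) :=
    { toLinearMap := M.mapQ M (LinearMap.mulLeft ℂ U) hmap
      cont := by
        refine (Submodule.isQuotientMap_mkQ M).continuous_iff.2 ?_
        exact (Submodule.continuous_mkQ M).comp (continuous_const.mul continuous_id) }
  have hT : ∀ x : B, T (Submodule.Quotient.mk x) = Submodule.Quotient.mk (U * x) := fun x => rfl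
  obtain ⟨z, hz⟩ := spectrum.nonempty T
  refine hz ?_
  set V : B := algebraMap ℂ B z - U with hV
  have hVc : ∀ x, V * x = x * V := fun x => by
    rw [hV, sub_mul, mul_sub, hU, Algebra.commutes]
  have hVL : V ∉ L := fun h => hcon z (by rw [← neg_sub]; exact L.neg_mem h)
  set S : (B ⧸ M) →L[ℂ] (B ⧸ M) := algebraMap ℂ _ z - T with hS
  have hSmk : ∀ x : B, S (Submodule.Quotient.mk x) = Submodule.Quotient.mk (V * x) := fun x => by
    rw [hS, hV, sub_mul, Submodule.Quotient.mk_sub, ← hT, ← Algebra.smul_def,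
      Submodule.Quotient.mk_smul]
    rfl
  -- `J` is the kernel of `z - T`, pulled back to `B`; it is a left ideal because `V` is central
  let J : Ideal B :=
    { carrier := {x | V * x ∈ L}
      add_mem' := fun {a b} ha hb => by
        simp only [Set.mem_ofPred_eq, mul_add] at *; exact L.add_mem ha hb
      zero_mem' := by simp
      smul_mem' := fun c x hx => by
        simp only [Set.mem_ofPred_eq, smul_eq_mul] at *
        rw [← mul_assoc, hVc c, mul_assoc]; exact L.mul_mem_left c hx }
  have hJ : J = L := by
    refine (hL.eq_of_le (fun h => hVL ?_) (fun x hx => L.mul_mem_left V hx)).symm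
    have : (1 : B) ∈ J := h ▸ Submodule.mem_top
    simpa [J] using (show V * 1 ∈ L from this)
  have hinj : S.ker = ⊥ := by
    refine LinearMap.ker_eq_bot'.2 fun q hq => ?_
    obtain ⟨x, rfl⟩ := Submodule.Quotient.mk_surjective M q
    have hq' : S (Submodule.Quotient.mk x) = 0 := hq
    rw [hSmk, Submodule.Quotient.mk_eq_zero] at hq'
    rw [Submodule.Quotient.mk_eq_zero]
    have : x ∈ J := hq'
    rw [hJ] at this; exact this
  have hsurj : S.range = ⊤ := by
    have htop : L ⊔ Ideal.span {V} = ⊤ := by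
      by_contra hne
      have := hL.eq_of_le hne le_sup_left
      exact hVL (this ▸ Ideal.mem_sup_right (Ideal.mem_span_singleton_self V))
    refine LinearMap.range_eq_top.2 fun q => ?_
    obtain ⟨y, rfl⟩ := Submodule.Quotient.mk_surjective M q
    obtain ⟨l, hl, w, hw, hlw⟩ :=
      Submodule.mem_sup.1 (htop ▸ Submodule.mem_top : y ∈ L ⊔ Ideal.span {V})
    obtain ⟨a, rfl⟩ := Ideal.mem_span_singleton'.1 hw
    refine ⟨Submodule.Quotient.mk a, (hSmk a).trans ?_⟩
    rw [Submodule.Quotient.eq, hVc a, ← hlw]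
    simpa using (M.neg_mem (x := l) hl)
  exact ContinuousLinearMap.isUnit_iff_bijective.2
    ⟨LinearMap.ker_eq_bot.1 hinj, LinearMap.range_eq_top.1 hsurj⟩

/-- If `F = ∑ pₙ Uⁿ` had no left inverse, it would lie in a maximal left ideal `L`. Modulo `L` the
central unit `U` is a scalar `z`, with `|z| = 1` since `U` and `U⁻¹` are contractions. As `L` is a
closed left ideal, it then contains `∑ zⁿ pₙ`, which is left invertible: a contradiction. -/
theorem exists_left_inverse {B : Type*} [NormedRing B] [NormedAlgebra ℂ B]
    [CompleteSpace B] (U : Bˣ) (hU : ∀ x, (U : B) * x = x * U)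
    (hU1 : ‖(U : B)‖ ≤ 1) (hU2 : ‖((U⁻¹ : Bˣ) : B)‖ ≤ 1) (p : ℤ → B) (F : B)
    (hF : HasSum (fun n => p n * ((U ^ n : Bˣ) : B)) F)
    (hp : ∀ z : ℂ, ‖z‖ = 1 → ∃ s, HasSum (fun n => z ^ n • p n) s ∧ ∃ b, b * s = 1) :
    ∃ G, G * F = 1 := by
  by_contra! hcon
  have hne : Ideal.span {F} ≠ ⊤ := fun h => by
    obtain ⟨G, hG⟩ := Ideal.mem_span_singleton'.1 ((Ideal.eq_top_iff_one _).1 h)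
    exact hcon G hG
  obtain ⟨L, hL, hFL⟩ := Ideal.exists_le_maximal _ hne
  replace hFL : F ∈ L := hFL (Ideal.mem_span_singleton_self F)
  have hunit : ∀ x ∈ L, ¬ IsUnit x := fun x hx hxu => hL.ne_top (L.eq_top_of_isUnit_mem hx hxu)
  obtain ⟨z, hz⟩ := exists_sub_algebraMap_mem_of_isMaximal (U : B) hU L
  have hz1 : ‖z‖ = 1 := by
    refine le_antisymm (not_lt.1 fun hlt => ?_) (not_lt.1 fun hlt => ?_)
    · have hz0 : z ≠ 0 := by rintro rfl; simp at hlt; linarith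
      have hn : ‖z⁻¹ • (U : B)‖ < 1 := by
        rw [norm_smul, norm_inv]
        calc ‖z‖⁻¹ * ‖(U : B)‖ ≤ ‖z‖⁻¹ * 1 := by gcongr
          _ < 1 := by rw [mul_one]; exact inv_lt_one_of_one_lt₀ hlt
      refine hunit _ (L.mul_mem_left (algebraMap ℂ B (-z⁻¹)) hz) ?_
      have e : algebraMap ℂ B (-z⁻¹) * ((U : B) - algebraMap ℂ B z) = 1 - z⁻¹ • (U : B) := by
        rw [mul_sub, ← map_mul, ← Algebra.smul_def, neg_mul, inv_mul_cancel₀ hz0]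
        simp; abel
      rw [e]; exact isUnit_one_sub_of_norm_lt_one hn
    · have hn : ‖z • ((U⁻¹ : Bˣ) : B)‖ < 1 := by
        rw [norm_smul]
        calc ‖z‖ * ‖((U⁻¹ : Bˣ) : B)‖ ≤ ‖z‖ * 1 := by gcongr
          _ < 1 := by rwa [mul_one]
      refine hunit _ (L.mul_mem_left ((U⁻¹ : Bˣ) : B) hz) ?_
      have e : ((U⁻¹ : Bˣ) : B) * ((U : B) - algebraMap ℂ B z) = 1 - z • ((U⁻¹ : Bˣ) : B) := by
        rw [mul_sub, Units.inv_mul, Algebra.smul_def, Algebra.commutes]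
      rw [e]; exact isUnit_one_sub_of_norm_lt_one hn
  have hz0 : z ≠ 0 := by rintro rfl; simp at hz1
  have hpow : ∀ n : ℤ, ((U ^ n : Bˣ) : B) - algebraMap ℂ B (z ^ n) ∈ L := by
    intro n
    induction n with
    | zero => simp
    | succ n ih =>
      have e : ((U ^ ((n : ℤ) + 1) : Bˣ) : B) - algebraMap ℂ B (z ^ ((n : ℤ) + 1)) =
          ((U ^ (n : ℤ) : Bˣ) : B) * ((U : B) - algebraMap ℂ B z) +
          algebraMap ℂ B z * (((U ^ (n : ℤ) : Bˣ) : B) - algebraMap ℂ B (z ^ (n : ℤ))) := by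
        rw [zpow_add_one, zpow_add_one₀ hz0, map_mul, mul_sub, mul_sub, ← Algebra.commutes z,
          ← Algebra.commutes z, Units.val_mul]
        abel
      rw [e]
      exact L.add_mem (L.mul_mem_left _ hz) (L.mul_mem_left _ ih)
    | pred n ih =>
      have e : ((U ^ (-(n : ℤ) - 1) : Bˣ) : B) - algebraMap ℂ B (z ^ (-(n : ℤ) - 1)) =
          algebraMap ℂ B z⁻¹ * (((U ^ (-n : ℤ) : Bˣ) : B) - algebraMap ℂ B (z ^ (-n : ℤ))) -
          algebraMap ℂ B z⁻¹ * ((U ^ (-(n : ℤ) - 1) : Bˣ) : B) * ((U : B) - algebraMap ℂ B z) := by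
        have h1 : ((U ^ (-(n : ℤ)) : Bˣ) : B) = ((U ^ (-(n : ℤ) - 1) : Bˣ) : B) * U := by
          rw [← Units.val_mul, ← zpow_add_one, sub_add_cancel]
        have h2 : algebraMap ℂ B z⁻¹ * algebraMap ℂ B z = 1 := by
          rw [← map_mul, inv_mul_cancel₀ hz0, map_one]
        have h3 : algebraMap ℂ B z⁻¹ * ((U ^ (-(n : ℤ) - 1) : Bˣ) : B) * algebraMap ℂ B z
            = ((U ^ (-(n : ℤ) - 1) : Bˣ) : B) := by
          rw [mul_assoc, ← Algebra.commutes z, ← mul_assoc, h2, one_mul]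
        rw [mul_sub, mul_sub, h3, ← map_mul, h1, zpow_sub_one₀ hz0, mul_comm z⁻¹, mul_assoc]
        abel
      rw [e]
      exact L.sub_mem (L.mul_mem_left _ ih) (L.mul_mem_left _ hz)
  obtain ⟨s, hs, b, hb⟩ := hp z hz1
  have hdiff : F - s ∈ L := by
    have hcl : IsClosed (L : Set B) := Ideal.IsMaximal.isClosed (I := L)
    refine hcl.mem_of_tendsto (hF.sub hs) (Eventually.of_forall fun t => ?_)
    refine L.sum_mem fun n _ => ?_
    rw [Algebra.smul_def, Algebra.commutes, ← mul_sub]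
    exact L.mul_mem_left _ (hpow n)
  have hsL : s ∈ L := by simpa using L.sub_mem hFL hdiff
  exact hunit 1 (hb ▸ L.mul_mem_left b hsL) isUnit_one

/-- The right inverse comes from `exists_left_inverse` applied in the opposite algebra. -/
theorem isUnit_of_forall_isUnit {B : Type*} [NormedRing B] [NormedAlgebra ℂ B]
    [CompleteSpace B] (U : Bˣ) (hU : ∀ x, (U : B) * x = x * U)
    (hU1 : ‖(U : B)‖ ≤ 1) (hU2 : ‖((U⁻¹ : Bˣ) : B)‖ ≤ 1) (p : ℤ → B) (F : B)
    (hF : HasSum (fun n => p n * ((U ^ n : Bˣ) : B)) F)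
    (hp : ∀ z : ℂ, ‖z‖ = 1 → ∃ s, HasSum (fun n => z ^ n • p n) s ∧ IsUnit s) :
    IsUnit F := by
  obtain ⟨G, hG⟩ := exists_left_inverse U hU hU1 hU2 p F hF fun z hz => by
    obtain ⟨s, hs, hsu⟩ := hp z hz
    exact ⟨s, hs, hsu.exists_left_inv⟩
  have hUn : ∀ (n : ℤ) (x : B), ((U ^ n : Bˣ) : B) * x = x * ((U ^ n : Bˣ) : B) := fun n x =>
    (Commute.units_zpow_right (show Commute x (U : B) from (hU x).symm) n).symm.eq
  let W : (Bᵐᵒᵖ)ˣ := Units.opEquiv.symm (MulOpposite.op U)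
  have hWn : ∀ n : ℤ, ((W ^ n : (Bᵐᵒᵖ)ˣ) : Bᵐᵒᵖ) = MulOpposite.op ((U ^ n : Bˣ) : B) := fun n => by
    have : W ^ n = Units.opEquiv.symm (MulOpposite.op (U ^ n)) := by
      rw [MulOpposite.op_zpow, map_zpow]
    rw [this]; rfl
  obtain ⟨H, hH⟩ := exists_left_inverse W (fun x => MulOpposite.unop_injective (hU x.unop).symm)
    hU1 hU2 (fun n => MulOpposite.op (p n)) (MulOpposite.op F) (by
      have := hF.op
      refine this.congr_fun fun n => ?_
      rw [hWn, ← MulOpposite.op_mul, hUn]) fun z hz => by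
    obtain ⟨s, hs, hsu⟩ := hp z hz
    obtain ⟨b, hb⟩ := hsu.exists_right_inv
    exact ⟨MulOpposite.op s, hs.op, MulOpposite.op b, MulOpposite.unop_injective hb⟩
  have hH' : F * H.unop = 1 := congrArg MulOpposite.unop hH
  exact isUnit_iff_exists_and_exists.2 ⟨⟨_, hH'⟩, ⟨G, hG⟩⟩

/-! ### The Banach algebra of operators on `ℓ¹(ℤ, 𝒜)` commuting with the shift -/

section Ell

variable {𝒜 : Type*} [NormedRing 𝒜]

/-- The Banach space `ℓ¹(ℤ, 𝒜)` of absolutely summable sequences. It is a `def`, hidden from instance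
search, so that its only topology is the one of the norm. -/
def EllOne (𝒜 : Type*) [NormedRing 𝒜] : Type _ := lp (fun _ : ℤ => 𝒜) 1

namespace EllOne

noncomputable instance : NormedAddCommGroup (EllOne 𝒜) :=
  inferInstanceAs (NormedAddCommGroup (lp (fun _ : ℤ => 𝒜) 1))

noncomputable instance [NormedAlgebra ℂ 𝒜] : NormedSpace ℂ (EllOne 𝒜) :=
  inferInstanceAs (NormedSpace ℂ (lp (fun _ : ℤ => 𝒜) 1))

instance [CompleteSpace 𝒜] : CompleteSpace (EllOne 𝒜) :=
  inferInstanceAs (CompleteSpace (lp (fun _ : ℤ => 𝒜) 1))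

instance : CoeFun (EllOne 𝒜) fun _ => ℤ → 𝒜 := ⟨fun x => x.1⟩

@[ext]
theorem ext {x y : EllOne 𝒜} (h : ∀ n, x n = y n) : x = y := lp.ext (funext h)

/-- The sequence with entry `1` at index `0` and `0` elsewhere, i.e. the constant series `1`. -/
noncomputable def delta : EllOne 𝒜 := lp.single 1 (0 : ℤ) (1 : 𝒜)

theorem summable_norm (x : EllOne 𝒜) : Summable fun n => ‖x n‖ := by
  simpa using (lp.memℓp x).summable (by simp)

theorem norm_eq (x : EllOne 𝒜) : ‖x‖ = ∑' n, ‖x n‖ := by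
  refine (lp.norm_eq_tsum_rpow (p := 1) (by simp) (x : lp (fun _ : ℤ => 𝒜) 1)).trans ?_
  simp only [ENNReal.toReal_one, Real.rpow_one, div_one]

theorem memℓp_of_summable {x : ℤ → 𝒜} (hx : Summable fun n => ‖x n‖) :
    Memℓp (E := fun _ : ℤ => 𝒜) x 1 :=
  memℓp_gen (by simpa using hx)

variable [NormedAlgebra ℂ 𝒜]

/-- The translation `(xₙ) ↦ (xₙ₋ₖ)`, i.e. multiplication of the series `∑ zⁿ xₙ` by `zᵏ`. -/
noncomputable def shift (k : ℤ) : EllOne 𝒜 →L[ℂ] EllOne 𝒜 :=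
  LinearMap.mkContinuous
    { toFun := fun x => ⟨fun n => x (n - k), memℓp_of_summable <|
        (Equiv.subRight k).summable_iff.2 (summable_norm x)⟩
      map_add' := fun x y => by ext n; rfl
      map_smul' := fun c x => by ext n; rfl }
    1 fun x => by
      rw [one_mul, norm_eq, norm_eq]
      exact ((Equiv.subRight k).tsum_eq fun n => ‖x n‖).le

theorem shift_apply (k : ℤ) (x : EllOne 𝒜) (n : ℤ) : shift k x n = x (n - k) := rfl

theorem norm_shift_le (k : ℤ) : ‖(shift k : EllOne 𝒜 →L[ℂ] EllOne 𝒜)‖ ≤ 1 :=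
  LinearMap.mkContinuous_norm_le _ zero_le_one _

theorem shift_mul (j k : ℤ) :
    (shift j * shift k : EllOne 𝒜 →L[ℂ] EllOne 𝒜) = shift (j + k) := by
  ext x n
  exact congrArg x (sub_sub n j k)

theorem shift_zero : (shift 0 : EllOne 𝒜 →L[ℂ] EllOne 𝒜) = 1 := by
  ext x n
  exact congrArg x (sub_zero n)

/-- Entrywise left multiplication by `a`, as a bounded operator on `ℓ¹(ℤ, 𝒜)`. -/
noncomputable def leftMulCLM (a : 𝒜) : EllOne 𝒜 →L[ℂ] EllOne 𝒜 :=
  LinearMap.mkContinuous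
    { toFun := fun x => ⟨fun n => a * x n, memℓp_of_summable <|
        Summable.of_nonneg_of_le (fun _ => norm_nonneg _) (fun n => norm_mul_le a (x n))
          ((summable_norm x).mul_left ‖a‖)⟩
      map_add' := fun x y => by ext n; exact mul_add _ _ _
      map_smul' := fun c x => by ext n; exact mul_smul_comm _ _ _ }
    ‖a‖ fun x => by
      rw [norm_eq, norm_eq, ← tsum_mul_left]
      exact Summable.tsum_le_tsum (fun n => norm_mul_le a (x n))
        (Summable.of_nonneg_of_le (fun _ => norm_nonneg _) (fun n => norm_mul_le a (x n))
          ((summable_norm x).mul_left ‖a‖)) ((summable_norm x).mul_left ‖a‖)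

theorem leftMulCLM_apply (a : 𝒜) (x : EllOne 𝒜) (n : ℤ) : leftMulCLM a x n = a * x n := rfl

theorem norm_leftMulCLM_le (a : 𝒜) : ‖leftMulCLM a‖ ≤ ‖a‖ :=
  LinearMap.mkContinuous_norm_le _ (norm_nonneg _) _

variable (𝒜) in
/-- The operators on `ℓ¹(ℤ, 𝒜)` that commute with the shift: a closed subalgebra in which the shift
is central. It stands in for the convolution algebra `ℓ¹(ℤ, 𝒜)`. -/
noncomputable def shiftCommutant : Subalgebra ℂ (EllOne 𝒜 →L[ℂ] EllOne 𝒜) :=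
  Subalgebra.centralizer ℂ {shift 1}

theorem mem_shiftCommutant {T : EllOne 𝒜 →L[ℂ] EllOne 𝒜} :
    T ∈ shiftCommutant 𝒜 ↔ shift 1 * T = T * shift 1 := by
  simp [shiftCommutant, Subalgebra.mem_centralizer_iff]

theorem completeSpace_centralizer {X : Type*} [NormedAddCommGroup X] [NormedSpace ℂ X]
    [CompleteSpace X] (s : Set (X →L[ℂ] X)) : CompleteSpace (Subalgebra.centralizer ℂ s) :=
  IsClosed.completeSpace_coe (hs := Set.isClosed_centralizer s)

instance [CompleteSpace 𝒜] : CompleteSpace (shiftCommutant 𝒜) :=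
  completeSpace_centralizer _

theorem shift_mem (k : ℤ) : shift k ∈ shiftCommutant 𝒜 := by
  rw [mem_shiftCommutant, shift_mul, shift_mul, add_comm]

/-- The shift as a unit of `shiftCommutant 𝒜`. -/
noncomputable def shiftUnit : (shiftCommutant 𝒜)ˣ where
  val := ⟨shift 1, shift_mem 1⟩
  inv := ⟨shift (-1), shift_mem (-1)⟩
  val_inv := Subtype.ext ((shift_mul _ _).trans shift_zero)
  inv_val := Subtype.ext ((shift_mul _ _).trans shift_zero)

theorem coe_shiftUnit_zpow (n : ℤ) :
    (((shiftUnit ^ n : (shiftCommutant 𝒜)ˣ) : shiftCommutant 𝒜) :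
      EllOne 𝒜 →L[ℂ] EllOne 𝒜) = shift n := by
  induction n with
  | zero => simp [shift_zero]
  | succ n ih =>
    rw [zpow_add_one, Units.val_mul, MulMemClass.coe_mul, ih]
    exact shift_mul _ _
  | pred n ih =>
    rw [zpow_sub_one, Units.val_mul, MulMemClass.coe_mul, ih]
    exact shift_mul _ _

/-- Left multiplication as an algebra homomorphism `𝒜 → shiftCommutant 𝒜`. -/
noncomputable def leftMul : 𝒜 →ₐ[ℂ] shiftCommutant 𝒜 :=
  AlgHom.codRestrict
    { toFun := leftMulCLM
      map_one' := by ext x n; exact one_mul _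
      map_mul' := fun a b => by ext x n; exact mul_assoc _ _ _
      map_zero' := by ext x n; exact zero_mul _
      map_add' := fun a b => by ext x n; exact add_mul _ _ _
      commutes' := fun c => by ext x n; exact (Algebra.smul_def c (x n)).symm }
    (shiftCommutant 𝒜) fun a => mem_shiftCommutant.2 (by ext x n; rfl)

theorem coe_leftMul (a : 𝒜) : (leftMul a : EllOne 𝒜 →L[ℂ] EllOne 𝒜) = leftMulCLM a := rfl

theorem continuous_leftMul : Continuous (leftMul : 𝒜 → shiftCommutant 𝒜) :=
  AddMonoidHomClass.continuous_of_bound (leftMul (𝒜 := 𝒜)) 1 fun a => by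
    rw [one_mul]; exact norm_leftMulCLM_le a

theorem summable_evalAt (z : ℂ) (hz : ‖z‖ = 1) (x : EllOne 𝒜) :
    Summable fun n : ℤ => ‖z ^ n • x n‖ := by
  simpa [norm_smul, norm_zpow, hz] using summable_norm x

variable [CompleteSpace 𝒜]

/-- The sum `∑ zⁿ xₙ` at a point `z` of the unit circle. -/
noncomputable def evalAt (z : ℂ) (hz : ‖z‖ = 1) : EllOne 𝒜 →L[ℂ] 𝒜 :=
  LinearMap.mkContinuous
    { toFun := fun x => ∑' n : ℤ, z ^ n • x n
      map_add' := fun x y => by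
        rw [← (summable_evalAt z hz x).of_norm.tsum_add (summable_evalAt z hz y).of_norm]
        exact tsum_congr fun n => smul_add _ _ _
      map_smul' := fun c x => by
        rw [RingHom.id_apply, ← (summable_evalAt z hz x).of_norm.tsum_const_smul]
        exact tsum_congr fun n => smul_comm _ _ _ }
    1 fun x => by
      rw [one_mul, norm_eq]
      refine (norm_tsum_le_tsum_norm (summable_evalAt z hz x)).trans_eq ?_
      simp [norm_smul, norm_zpow, hz]

theorem hasSum_evalAt (z : ℂ) (hz : ‖z‖ = 1) (x : EllOne 𝒜) :
    HasSum (fun n : ℤ => z ^ n • x n) (evalAt z hz x) :=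
  (summable_evalAt z hz x).of_norm.hasSum

theorem evalAt_shift (z : ℂ) (hz : ‖z‖ = 1) (k : ℤ) (x : EllOne 𝒜) :
    evalAt z hz (shift k x) = z ^ k • evalAt z hz x := by
  have hz0 : z ≠ 0 := by rintro rfl; simp at hz
  refine (hasSum_evalAt z hz _).unique ?_
  refine ((Equiv.subRight k).hasSum_iff.2 ((hasSum_evalAt z hz x).const_smul (z ^ k))).congr_fun ?_
  intro n
  simp only [Function.comp, Equiv.subRight_apply, shift_apply, smul_smul, ← zpow_add₀ hz0]
  congr 2; ring

theorem evalAt_leftMul (z : ℂ) (hz : ‖z‖ = 1) (a : 𝒜) (x : EllOne 𝒜) :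
    evalAt z hz (leftMulCLM a x) = a * evalAt z hz x := by
  refine (hasSum_evalAt z hz _).unique ?_
  refine ((hasSum_evalAt z hz x).mul_left a).congr_fun fun n => ?_
  rw [leftMulCLM_apply, mul_smul_comm]

theorem evalAt_delta (z : ℂ) (hz : ‖z‖ = 1) :
    evalAt z hz (delta : EllOne 𝒜) = 1 := by
  refine (hasSum_evalAt z hz _).unique ?_
  have h0 : (z ^ (0 : ℤ)) • (delta : EllOne 𝒜) 0 = 1 := by
    rw [zpow_zero, one_smul]
    exact lp.single_apply_self (E := fun _ : ℤ => 𝒜) 1 (0 : ℤ) (1 : 𝒜)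
  rw [← h0]
  refine hasSum_single (0 : ℤ) fun n hn => ?_
  have h1 : (delta : EllOne 𝒜) n = 0 :=
    lp.single_apply_ne (E := fun _ : ℤ => 𝒜) 1 (0 : ℤ) (1 : 𝒜) hn
  rw [h1, smul_zero]

/-- The convolution operator `∑ₙ (left multiplication by cₙ) Sⁿ` with kernel `c`, where `S` is the
shift. The series converges for summable `‖c ·‖`; for other `c` the value carries no meaning. -/
noncomputable def convOp (c : ℤ → 𝒜) : shiftCommutant 𝒜 :=
  ∑' n, leftMul (c n) * ((shiftUnit ^ n : (shiftCommutant 𝒜)ˣ) : shiftCommutant 𝒜)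

theorem hasSum_convOp (c : ℤ → 𝒜) (hc : Summable fun n => ‖c n‖) :
    HasSum (fun n => leftMul (c n) * ((shiftUnit ^ n : (shiftCommutant 𝒜)ˣ) : shiftCommutant 𝒜))
      (convOp c) := by
  refine (Summable.of_norm_bounded hc fun n => ?_).hasSum
  refine (norm_mul_le _ _).trans ?_
  have h2 : ‖((shiftUnit ^ n : (shiftCommutant 𝒜)ˣ) : shiftCommutant 𝒜)‖ ≤ 1 := by
    change ‖(((shiftUnit ^ n : (shiftCommutant 𝒜)ˣ) : shiftCommutant 𝒜) :
      EllOne 𝒜 →L[ℂ] EllOne 𝒜)‖ ≤ 1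
    rw [coe_shiftUnit_zpow]; exact norm_shift_le n
  calc _ ≤ ‖c n‖ * 1 := mul_le_mul (norm_leftMulCLM_le (c n)) h2 (norm_nonneg _) (norm_nonneg _)
    _ = ‖c n‖ := mul_one _

/-- The symbol of `T` at `z`: the value at `z` of the series whose coefficients are `T delta`. -/
noncomputable def symbolAt (z : ℂ) (hz : ‖z‖ = 1) : shiftCommutant 𝒜 →L[ℂ] 𝒜 :=
  (evalAt z hz).comp <|
    (ContinuousLinearMap.apply ℂ (EllOne 𝒜) (delta)).comp
      (shiftCommutant 𝒜).toSubmodule.subtypeL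

theorem symbolAt_apply (z : ℂ) (hz : ‖z‖ = 1) (T : shiftCommutant 𝒜) :
    symbolAt z hz T = evalAt z hz ((T : EllOne 𝒜 →L[ℂ] EllOne 𝒜) (delta)) :=
  rfl

theorem symbolAt_one (z : ℂ) (hz : ‖z‖ = 1) : symbolAt z hz (1 : shiftCommutant 𝒜) = 1 :=
  evalAt_delta z hz

/-- The symbol of a convolution operator acts multiplicatively; here `s` is the value at `z` of the
series with coefficients `c`. -/
theorem symbolAt_convOp_mul (c : ℤ → 𝒜) (hc : Summable fun n => ‖c n‖) (z : ℂ) (hz : ‖z‖ = 1)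
    (s : 𝒜) (hs : HasSum (fun n => z ^ n • c n) s) (T : shiftCommutant 𝒜) :
    symbolAt z hz (convOp c * T) = s * symbolAt z hz T := by
  have h1 := ((hasSum_convOp c hc).mul_right T).mapL (symbolAt z hz)
  refine h1.unique ((hs.mul_right (symbolAt z hz T)).congr_fun fun n => ?_)
  rw [symbolAt_apply, mul_assoc, MulMemClass.coe_mul, MulMemClass.coe_mul, coe_shiftUnit_zpow,
    coe_leftMul]
  change evalAt z hz (leftMulCLM (c n) (shift n _)) = _
  rw [evalAt_leftMul, evalAt_shift, mul_smul_comm, smul_mul_assoc]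
  rfl

/-- Resolvent form of Wiener's lemma: if `u - ∑ zⁿ cₙ` is invertible for every `z` on the unit
circle, then `u` minus the convolution operator of `c` is invertible. -/
theorem isUnit_sub_convOp (c : ℤ → 𝒜) (hc : Summable fun n => ‖c n‖) (u : ℂ)
    (h : ∀ z : ℂ, ‖z‖ = 1 → ∃ s, HasSum (fun n => z ^ n • c n) s ∧
      IsUnit (algebraMap ℂ 𝒜 u - s)) :
    IsUnit (algebraMap ℂ (shiftCommutant 𝒜) u - convOp c) := by
  refine isUnit_of_forall_isUnit shiftUnit (fun x => Subtype.ext (mem_shiftCommutant.1 x.2))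
    (norm_shift_le 1) (norm_shift_le (-1))
    (fun n => (if n = 0 then algebraMap ℂ (shiftCommutant 𝒜) u else 0) - leftMul (c n)) _ ?_ ?_
  · refine ((hasSum_ite_eq (0 : ℤ) (algebraMap ℂ (shiftCommutant 𝒜) u)).sub
      (hasSum_convOp c hc)).congr_fun fun n => ?_
    by_cases hn : n = 0
    · subst hn; simp
    · simp only [hn, if_false, zero_sub]
      exact neg_mul (leftMul (c n)) _
  · intro z hz
    obtain ⟨s, hs, hsu⟩ := h z hz
    refine ⟨leftMul (algebraMap ℂ 𝒜 u - s), ?_, hsu.map leftMul⟩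
    rw [map_sub, AlgHom.commutes]
    refine ((hasSum_ite_eq (0 : ℤ) (algebraMap ℂ (shiftCommutant 𝒜) u)).sub
      (hs.map leftMul continuous_leftMul)).congr_fun fun n => ?_
    by_cases hn : n = 0
    · subst hn; simp
    · simp [hn]

end EllOne
end Ell

/-! ### The contour integral -/

theorem map_circleIntegral {E F : Type*} [NormedAddCommGroup E] [NormedSpace ℂ E] [CompleteSpace E]
    [NormedAddCommGroup F] [NormedSpace ℂ F] [CompleteSpace F] (Λ : E →L[ℂ] F) {k : ℂ → E} {c : ℂ}
    {r : ℝ} (hk : CircleIntegrable k c r) :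
    Λ (∮ u in C(c, r), k u) = ∮ u in C(c, r), Λ (k u) := by
  rw [circleIntegral, circleIntegral, ← ContinuousLinearMap.intervalIntegral_comp_comm _ hk.out]
  simp only [map_smul]

/-- Wiener's Lemma for holomorphic functional calculus (circle-contour version):
if `f ∈ A(𝒜)`, and `u·1 - f z` is invertible for every `z ∈ S¹` and every `u` on the
circle `|u - c₀| = ρ`, and `h` is continuous on this circle, then
`z ↦ (1/2πi) ∮_{|u-c₀|=ρ} h(u) (u·1 - f z)⁻¹ du` belongs to `A(𝒜)`. -/
theorem wiener_lemma_holomorphic_calculus {𝒜 : Type*} [NormedRing 𝒜] [NormedAlgebra ℂ 𝒜]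
    [CompleteSpace 𝒜] (f : ℂ → 𝒜) (c₀ : ℂ) (ρ : ℝ) (hρ : 0 < ρ) (h : ℂ → ℂ)
    (hf_cont : ContinuousOn f (Metric.sphere (0:ℂ) 1))
    (hf_sum : Summable fun n : ℤ => ‖fourierCoeffA f n‖)
    (hinv : ∀ z ∈ Metric.sphere (0:ℂ) 1, ∀ u ∈ Metric.sphere c₀ ρ,
      IsUnit (algebraMap ℂ 𝒜 u - f z))
    (hh : ContinuousOn h (Metric.sphere c₀ ρ)) :
    ContinuousOn
        (fun z => (2 * (Real.pi : ℂ) * Complex.I)⁻¹ •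
          (∮ u in C(c₀, ρ), h u • Ring.inverse (algebraMap ℂ 𝒜 u - f z)))
        (Metric.sphere (0:ℂ) 1) ∧
      Summable fun n : ℤ =>
        ‖fourierCoeffA (fun z => (2 * (Real.pi : ℂ) * Complex.I)⁻¹ •
          (∮ u in C(c₀, ρ), h u • Ring.inverse (algebraMap ℂ 𝒜 u - f z))) n‖ := by
  set g : ℂ → 𝒜 := fun z => (2 * (Real.pi : ℂ) * Complex.I)⁻¹ •
    (∮ u in C(c₀, ρ), h u • Ring.inverse (algebraMap ℂ 𝒜 u - f z)) with hg
  have hser := hasSum_fourierCoeffA f hf_cont hf_sum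
  let F : EllOne.shiftCommutant 𝒜 := EllOne.convOp (fourierCoeffA f)
  let R : ℂ → EllOne.shiftCommutant 𝒜 := fun u => Ring.inverse (algebraMap ℂ _ u - F)
  have hunit : ∀ u ∈ Metric.sphere c₀ ρ,
      IsUnit (algebraMap ℂ (EllOne.shiftCommutant 𝒜) u - F) := fun u hu =>
    EllOne.isUnit_sub_convOp _ hf_sum u fun z hz =>
      ⟨f z, hser z hz, hinv z (by simpa using hz) u hu⟩
  have hR : ContinuousOn R (Metric.sphere c₀ ρ) := fun u hu => by
    obtain ⟨v, hv⟩ := hunit u hu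
    have h1 : ContinuousAt (fun u : ℂ => algebraMap ℂ (EllOne.shiftCommutant 𝒜) u - F) u :=
      ((continuous_algebraMap ℂ (EllOne.shiftCommutant 𝒜)).sub continuous_const).continuousAt
    have h2 := NormedRing.inverse_continuousAt v
    rw [hv] at h2
    exact (ContinuousAt.comp (f := fun u : ℂ => algebraMap ℂ (EllOne.shiftCommutant 𝒜) u - F)
      h2 h1).continuousWithinAt
  -- one-sided multiplicativity of the symbol suffices, since `u - f z` is already invertible
  have hsymb : ∀ (z : ℂ) (hz : ‖z‖ = 1), ∀ u ∈ Metric.sphere c₀ ρ,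
      EllOne.symbolAt z hz (R u) = Ring.inverse (algebraMap ℂ 𝒜 u - f z) := by
    intro z hz u hu
    have hu1 := hinv z (by simpa using hz) u hu
    have e : (algebraMap ℂ 𝒜 u - f z) * EllOne.symbolAt z hz (R u) = 1 := by
      rw [sub_mul, ← EllOne.symbolAt_convOp_mul _ hf_sum z hz (f z) (hser z hz) (R u),
        ← Algebra.smul_def, ← map_smul, ← map_sub, Algebra.smul_def, ← sub_mul,
        Ring.mul_inverse_cancel _ (hunit u hu), EllOne.symbolAt_one]
    exact hu1.mul_left_cancel (e.trans (Ring.mul_inverse_cancel _ hu1).symm)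
  let Γ : EllOne.shiftCommutant 𝒜 :=
    (2 * (Real.pi : ℂ) * Complex.I)⁻¹ • ∮ u in C(c₀, ρ), h u • R u
  have hΓ : ∀ (z : ℂ) (hz : ‖z‖ = 1), EllOne.symbolAt z hz Γ = g z := by
    intro z hz
    have hci : CircleIntegrable (fun u => h u • R u) c₀ ρ :=
      (hh.smul hR).circleIntegrable hρ.le
    rw [hg, map_smul]
    congr 1
    rw [map_circleIntegral _ hci]
    refine circleIntegral.integral_congr hρ.le fun u hu => ?_
    simp only [map_smul]
    rw [hsymb z hz u hu]
  let γ : EllOne 𝒜 := (Γ : EllOne 𝒜 →L[ℂ] EllOne 𝒜) EllOne.delta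
  have hγ : ∀ z : ℂ, ‖z‖ = 1 → HasSum (fun n : ℤ => z ^ n • γ n) (g z) := fun z hz =>
    hΓ z hz ▸ EllOne.hasSum_evalAt z hz γ
  have hγs := EllOne.summable_norm γ
  refine ⟨?_, ?_⟩
  · have hcont : ContinuousOn (fun z : ℂ => ∑' n : ℤ, z ^ n • γ n) (Metric.sphere (0:ℂ) 1) := by
      refine continuousOn_tsum (u := fun n => ‖γ n‖) (fun n z hz => ?_) hγs fun n z hz => ?_
      · have hz0 : z ≠ 0 := by rintro rfl; simp at hz
        exact ((continuousAt_zpow₀ z n (Or.inl hz0)).smul continuousAt_const).continuousWithinAt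
      · have hz' : ‖z‖ = 1 := by simpa using hz
        simp [norm_smul, norm_zpow, hz']
    exact hcont.congr fun z hz => (hγ z (by simpa using hz)).tsum_eq.symm
  · simpa only [fourierCoeffA_of_hasSum g γ hγs hγ] using hγs
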